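/- Let ρ, C₁ be positive real numbers, let a ∈ [0,1), b ≥ 0, and let κ₁, κ₂ be real numbers satisfying ρ³(κ₁ + κ₂) > 2C₁ and ρ³·κ₁κ₂ > C₁·(κ₁ + κ₂). Define K₁ = κ₁/(1−a) + b and K₂ = κ₂/(1−a) + b. Then ρ³·K₁K₂ > C₁·(K₁ + K₂). -/

import Mathlib

/-- Algebraic core of the conformal transformation of the convexity condition
`ρ³·det(A₀) > C₁·Hₒ`: with `K₁ = κ₁/(1−a) + b`, `K₂ = κ₂/(1−a) + b`. -/
theorem stmt_1 (ρ C₁ a b κ₁ κ₂ : ℝ) (hρ : 0 < ρ) (hC₁ : 0 < C₁)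
    (ha : a ∈ Set.Ico (0 : ℝ) 1) (hb : 0 ≤ b)
    (hH : ρ ^ 3 * (κ₁ + κ₂) > 2 * C₁)
    (hdet : ρ ^ 3 * (κ₁ * κ₂) > C₁ * (κ₁ + κ₂)) :
    ρ ^ 3 * ((κ₁ / (1 - a) + b) * (κ₂ / (1 - a) + b))
      > C₁ * ((κ₁ / (1 - a) + b) + (κ₂ / (1 - a) + b)) := by
  obtain ⟨ha0, ha1⟩ := ha
  have hR : 0 < ρ ^ 3 := by positivity
  have ht : 1 ≤ (1 - a)⁻¹ := (one_le_inv₀ (by linarith)).2 (by linarith)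
  rw [div_eq_mul_inv, div_eq_mul_inv]
  generalize (1 - a)⁻¹ = t at *
  generalize ρ ^ 3 = R at *
  have hS : 0 < κ₁ + κ₂ := by
    by_contra h
    have := mul_nonpos_of_nonneg_of_nonpos hR.le (not_lt.1 h)
    linarith
  have ht0 : 0 < t := by linarith
  have h1 : 0 < t ^ 2 * (R * (κ₁ * κ₂) - C₁ * (κ₁ + κ₂)) :=
    mul_pos (by positivity) (by linarith)
  have h2 : 0 ≤ t * (t - 1) * (C₁ * (κ₁ + κ₂)) :=
    mul_nonneg (mul_nonneg ht0.le (by linarith)) (by positivity)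
  have h3 : 0 ≤ b * (R * (κ₁ + κ₂) - 2 * C₁) := mul_nonneg hb (by linarith)
  have h4 : 0 ≤ b * (t - 1) * (R * (κ₁ + κ₂)) :=
    mul_nonneg (mul_nonneg hb (by linarith)) (by positivity)
  have h5 : 0 ≤ R * b ^ 2 := by positivity
  linarith
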